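/- arXiv:math/9807077 — 2 statements merged into one kernel-verified Lean document; each statement's English description precedes it below -/
import Mathlib

section
/- Let V be a vertex operator algebra with V = ⊕_{n∈ℕ} V_{(n)} (no negative weights) and V_{(0)} = ℂ1. If V satisfies the C₂-finiteness condition (dim V/C₂(V) < ∞), then V is finitely generated as a vertex operator algebra. (In this situation C₂(V) ⊆ C₁(V).) -/
noncomputable section

/-- The generalized binomial coefficient `C(m, i)` for `m ∈ ℤ`, `i ∈ ℕ`,
as a complex number: `m(m-1)⋯(m-i+1)/i!`. -/
def cchoose (m : ℤ) (i : ℕ) : ℂ :=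
  (∏ j ∈ Finset.range i, ((m : ℂ) - (j : ℂ))) / (Nat.factorial i : ℂ)

/-- A vertex operator algebra `V = ⊕ₙ V₍ₙ₎` over `ℂ`.  The vertex operator map is
recorded through its modes `op u n v = uₙ v` (so `Y(u,x)v = Σₙ uₙv x^{-n-1}`), with
vacuum `one`, conformal vector `omega` (with `L(k) = ω_{k+1}`), central charge `cc`,
weight grading `wtSpace` with projections `proj`.  The Jacobi identity is recorded in
the equivalent form of the Borcherds identity on modes. -/
structure VOA where
  carrier : Type
  [grp : AddCommGroup carrier]
  [mdl : Module ℂ carrier]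
  op : carrier → ℤ → carrier → carrier
  one : carrier
  omega : carrier
  wtSpace : ℤ → Submodule ℂ carrier
  proj : ℤ → carrier → carrier
  cc : ℂ
  op_linear_left : ∀ (n : ℤ) (w : carrier), IsLinearMap ℂ fun u => op u n w
  op_linear_right : ∀ (u : carrier) (n : ℤ), IsLinearMap ℂ (op u n)
  trunc : ∀ u v : carrier, ∃ N : ℤ, ∀ n : ℤ, N ≤ n → op u n v = 0
  one_op : ∀ (n : ℤ) (v : carrier), op one n v = if n = -1 then v else 0
  create_nonneg : ∀ (v : carrier) (n : ℤ), 0 ≤ n → op v n one = 0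
  create : ∀ v : carrier, op v (-1) one = v
  borcherds : ∀ (u v w : carrier) (l m n : ℤ),
    (∑ᶠ i : ℕ, cchoose m i • op (op u (l + (i : ℤ)) v) (m + n - (i : ℤ)) w)
      = ∑ᶠ i : ℕ, ((-1 : ℂ) ^ i * cchoose l i) •
          (op u (l + m - (i : ℤ)) (op v (n + (i : ℤ)) w)
            - ((-1 : ℂ) ^ l) • op v (l + n - (i : ℤ)) (op u (m + (i : ℤ)) w))
  proj_linear : ∀ n : ℤ, IsLinearMap ℂ (proj n)
  proj_mem : ∀ (n : ℤ) (v : carrier), proj n v ∈ wtSpace n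
  proj_eq : ∀ n : ℤ, ∀ v ∈ wtSpace n, proj n v = v
  proj_ne : ∀ m n : ℤ, m ≠ n → ∀ v ∈ wtSpace m, proj n v = 0
  proj_finite : ∀ v : carrier, (Function.support fun n => proj n v).Finite
  proj_sum : ∀ v : carrier, (∑ᶠ n : ℤ, proj n v) = v
  fd : ∀ n : ℤ, FiniteDimensional ℂ (wtSpace n)
  lower_trunc : ∃ N : ℤ, ∀ n : ℤ, n < N → wtSpace n = ⊥
  one_wt : one ∈ wtSpace 0
  omega_wt : omega ∈ wtSpace 2
  op_wt : ∀ k m n : ℤ, ∀ u ∈ wtSpace k, ∀ v ∈ wtSpace m, op u n v ∈ wtSpace (k + m - n - 1)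
  L_zero : ∀ n : ℤ, ∀ v ∈ wtSpace n, op omega 1 v = (n : ℂ) • v
  L_neg_one : ∀ (u : carrier) (n : ℤ) (w : carrier),
    op (op omega 0 u) n w = (-(n : ℂ)) • op u (n - 1) w
  virasoro : ∀ (m n : ℤ) (v : carrier),
    op omega (m + 1) (op omega (n + 1) v) - op omega (n + 1) (op omega (m + 1) v)
      = ((m : ℂ) - (n : ℂ)) • op omega (m + n + 1) v
        + (if m + n = 0 then (((m : ℂ) ^ 3 - (m : ℂ)) / 12) * cc else 0) • v

attribute [instance] VOA.grp VOA.mdl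

namespace VOA

variable (V : VOA)

/-- The Virasoro operator `L(k) = ω_{k+1}`. -/
def L (k : ℤ) (v : V.carrier) : V.carrier := V.op V.omega (k + 1) v

/-- The positive-weight part `V₊ = ⊕_{n ≥ 1} V₍ₙ₎`. -/
def pos : Submodule ℂ V.carrier := ⨆ (n : ℤ) (_ : 1 ≤ n), V.wtSpace n

/-- Zhu's subspace `C₂(V) = span{u₋₂v : u, v ∈ V}`. -/
def C2 : Submodule ℂ V.carrier :=
  Submodule.span ℂ {x : V.carrier | ∃ u v : V.carrier, x = V.op u (-2) v}

/-- The subspace `C₁(V) = span(v₋₁V₊ (v ∈ V₊) together with L(-1)V)`. -/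
def C1 : Submodule ℂ V.carrier :=
  Submodule.span ℂ
    ({x : V.carrier | ∃ u ∈ V.pos, ∃ v ∈ V.pos, x = V.op u (-1) v}
      ∪ {x : V.carrier | ∃ v : V.carrier, x = V.op V.omega 0 v})

/-- Iterated application of modes: `iterApply [(u¹,n₁),…,(uʳ,n_r)] w = u¹_{n₁} ⋯ uʳ_{n_r} w`. -/
def iterApply : List (V.carrier × ℤ) → V.carrier → V.carrier
  | [], w => w
  | p :: l, w => V.op p.1 p.2 (iterApply l w)

/-- `U ⊆ V` generates `V` as a vertex operator algebra:  `V` is linearly spanned by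
the elements `u¹_{n₁} ⋯ uʳ_{n_r} 1` with `uⁱ ∈ U`, `n_i ∈ ℤ`. -/
def generates (U : Set V.carrier) : Prop :=
  Submodule.span ℂ {x : V.carrier | ∃ l : List (V.carrier × ℤ),
    (∀ p ∈ l, p.1 ∈ U) ∧ x = V.iterApply l V.one} = ⊤

/-- `V` is finitely generated as a vertex operator algebra. -/
def FinitelyGenerated : Prop := ∃ S : Finset V.carrier, V.generates ↑S

end VOA

/-- A weak `V`-module: all axioms of a module (truncation, vacuum, Jacobi identity in
Borcherds form) except those involving gradings. -/
structure WeakModule (V : VOA) where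
  carrier : Type
  [grp : AddCommGroup carrier]
  [mdl : Module ℂ carrier]
  op : V.carrier → ℤ → carrier → carrier
  op_linear_left : ∀ (n : ℤ) (w : carrier), IsLinearMap ℂ fun u => op u n w
  op_linear_right : ∀ (u : V.carrier) (n : ℤ), IsLinearMap ℂ (op u n)
  trunc : ∀ (u : V.carrier) (w : carrier), ∃ N : ℤ, ∀ n : ℤ, N ≤ n → op u n w = 0
  one_op : ∀ (n : ℤ) (w : carrier), op V.one n w = if n = -1 then w else 0
  borcherds : ∀ (u v : V.carrier) (w : carrier) (l m n : ℤ),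
    (∑ᶠ i : ℕ, cchoose m i • op (V.op u (l + (i : ℤ)) v) (m + n - (i : ℤ)) w)
      = ∑ᶠ i : ℕ, ((-1 : ℂ) ^ i * cchoose l i) •
          (op u (l + m - (i : ℤ)) (op v (n + (i : ℤ)) w)
            - ((-1 : ℂ) ^ l) • op v (l + n - (i : ℤ)) (op u (m + (i : ℤ)) w))

attribute [instance] WeakModule.grp WeakModule.mdl

namespace WeakModule

variable {V : VOA} (W : WeakModule V)

/-- `L(0)` acting on a weak module, as a linear map. -/
def L0 : W.carrier →ₗ[ℂ] W.carrier := IsLinearMap.mk' _ (W.op_linear_right V.omega 1)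

/-- The `L(0)`-eigenspace of eigenvalue `h`. -/
def eig (h : ℂ) : Submodule ℂ W.carrier :=
  LinearMap.ker (W.L0 - h • (LinearMap.id : W.carrier →ₗ[ℂ] W.carrier))

/-- The coefficient `v*ₙ` of the adjoint vertex operator
`⟨Y*(v,x)α, w⟩ = ⟨α, Y(e^{xL(1)}(-x^{-2})^{L(0)}v, x^{-1})w⟩` acting on the full dual
space: for `v` homogeneous of weight `h`,
`(v*ₙ α)(w) = (-1)^h Σ_{i≥0} (1/i!) α((L(1)^i v)_{2h-n-i-2} w)`, extended to general
`v` via the weight-space projections. -/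
def dmode (v : V.carrier) (n : ℤ) (α : W.carrier → ℂ) (w : W.carrier) : ℂ :=
  ∑ᶠ h : ℤ, ∑ᶠ i : ℕ,
    ((-1 : ℂ) ^ h / (Nat.factorial i : ℂ)) *
      α (W.op ((V.L 1)^[i] (V.proj h v)) (2 * h - n - (i : ℤ) - 2) w)

/-- `D(W) ⊆ W*`: the linear functionals `α` on `W` such that for every `v ∈ V`,
`Y*(v,x)α ∈ W*((x))`, i.e. `v*ₙ α = 0` for `n` sufficiently large. -/
def DW : Set (W.carrier → ℂ) :=
  {α | IsLinearMap ℂ α ∧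
    ∀ v : V.carrier, ∃ N : ℤ, ∀ n : ℤ, N ≤ n → ∀ w : W.carrier, W.dmode v n α w = 0}

/-- A subspace stable under all modes of all vertex operators, i.e. a `V`-submodule. -/
def IsStable (S : Submodule ℂ W.carrier) : Prop :=
  ∀ (v : V.carrier) (n : ℤ), ∀ m ∈ S, W.op v n m ∈ S

/-- An irreducible (nonzero, no proper nonzero stable subspaces) `V`-submodule. -/
def IsIrreducibleSub (S : Submodule ℂ W.carrier) : Prop :=
  S ≠ ⊥ ∧ W.IsStable S ∧
    ∀ T : Submodule ℂ W.carrier, W.IsStable T → T ≤ S → T = ⊥ ∨ T = S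

/-- A stable subspace which is an ordinary module: `L(0)` acts semisimply on it with
finite-dimensional eigenspaces, and for each `h` the eigenvalues `h + m` do not occur
for `m` a sufficiently negative integer. -/
def IsOrdinarySub (S : Submodule ℂ W.carrier) : Prop :=
  S ≤ (⨆ h : ℂ, W.eig h ⊓ S) ∧ (∀ h : ℂ, FiniteDimensional ℂ ↥(W.eig h ⊓ S)) ∧
    ∀ h : ℂ, ∃ N : ℤ, ∀ m : ℤ, m ≤ N → W.eig (h + (m : ℂ)) ⊓ S = ⊥

/-- The weak module `W` is irreducible. -/
def IsIrreducible : Prop :=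
  (⊥ : Submodule ℂ W.carrier) ≠ ⊤ ∧
    ∀ S : Submodule ℂ W.carrier, W.IsStable S → S = ⊥ ∨ S = ⊤

/-- `Cₙ(W) = span{v₋ₙw : v ∈ V, w ∈ W}`. -/
def Cn (n : ℤ) : Submodule ℂ W.carrier :=
  Submodule.span ℂ {x : W.carrier | ∃ (v : V.carrier) (w : W.carrier), x = W.op v (-n) w}

/-- `B(W) = span(u₋₁W (u ∈ V₊) together with v₀W (v homogeneous, wt v ≥ 2))`. -/
def BW : Submodule ℂ W.carrier :=
  Submodule.span ℂ
    ({x : W.carrier | ∃ v ∈ V.pos, ∃ w : W.carrier, x = W.op v (-1) w}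
      ∪ {x : W.carrier | ∃ k : ℤ, 2 ≤ k ∧ ∃ v ∈ V.wtSpace k, ∃ w : W.carrier, x = W.op v 0 w})

/-- Zhu's subspace `O(W) = span{Σ_{i≥0} C(wt v, i) v_{i-2} w}` so that `A(W) = W/O(W)`. -/
def OW : Submodule ℂ W.carrier :=
  Submodule.span ℂ
    {x : W.carrier | ∃ (k : ℤ) (v : V.carrier), v ∈ V.wtSpace k ∧
      ∃ w : W.carrier, x = ∑ᶠ i : ℕ, cchoose k i • W.op v ((i : ℤ) - 2) w}

/-- A subspace `T ⊇ O(W)` of `W` is closed under the Frenkel–Zhu left and right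
`A(V)`-actions `v * w = Σᵢ C(wt v, i) v_{i-1} w` and `w * v = Σᵢ C(wt v - 1, i) v_{i-1} w`;
for `T ⊇ O(W)` this expresses that `T/O(W)` is an `A(V)`-sub-bimodule of `A(W)`. -/
def BimoduleClosed (T : Submodule ℂ W.carrier) : Prop :=
  ∀ k : ℤ, ∀ v ∈ V.wtSpace k, ∀ w ∈ T,
    (∑ᶠ i : ℕ, cchoose k i • W.op v ((i : ℤ) - 1) w) ∈ T ∧
    (∑ᶠ i : ℕ, cchoose (k - 1) i • W.op v ((i : ℤ) - 1) w) ∈ T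

/-- Equivalence (isomorphism) of weak modules. -/
def Equiv (M N : WeakModule V) : Prop :=
  ∃ e : M.carrier ≃ₗ[ℂ] N.carrier,
    ∀ (v : V.carrier) (n : ℤ) (w : M.carrier), e (M.op v n w) = N.op v n (e w)

end WeakModule

/-- `V` is of class 𝒜: `L(0)` acts semisimply on every weak `V`-module. -/
def VOA.classA (V : VOA) : Prop :=
  ∀ M : WeakModule V, (⨆ h : ℂ, M.eig h) = ⊤

/-- `V` is regular: every weak `V`-module is a direct sum of irreducible ordinary
`V`-modules. -/
def VOA.regular (V : VOA) : Prop :=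
  ∀ M : WeakModule V, ∃ (ι : Type) (S : ι → Submodule ℂ M.carrier),
    (∀ i, M.IsIrreducibleSub (S i) ∧ M.IsOrdinarySub (S i)) ∧
    (∀ i, Disjoint (S i) (⨆ (j : ι) (_ : j ≠ i), S j)) ∧ (⨆ i, S i) = ⊤

/-- A generalized `V`-module: a weak module with a semisimple `L(0)`-action, graded by
the `L(0)`-eigenvalues, with weight-space projections `projW`. -/
structure GenModule (V : VOA) extends WeakModule V where
  wt : ℂ → Submodule ℂ carrier
  projW : ℂ → carrier → carrier
  projW_linear : ∀ h : ℂ, IsLinearMap ℂ (projW h)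
  projW_mem : ∀ (h : ℂ) (w : carrier), projW h w ∈ wt h
  projW_eq : ∀ h : ℂ, ∀ w ∈ wt h, projW h w = w
  projW_ne : ∀ g h : ℂ, g ≠ h → ∀ w ∈ wt g, projW h w = 0
  projW_finite : ∀ w : carrier, (Function.support fun h => projW h w).Finite
  projW_sum : ∀ w : carrier, (∑ᶠ h : ℂ, projW h w) = w
  wt_L0 : ∀ h : ℂ, ∀ w ∈ wt h, op V.omega 1 w = h • w
  wt_op : ∀ k : ℤ, ∀ v ∈ V.wtSpace k, ∀ (h : ℂ) (n : ℤ), ∀ w ∈ wt h,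
    op v n w ∈ wt (h + (k : ℂ) - (n : ℂ) - 1)

/-- An ordinary `V`-module: a generalized module whose weight spaces are
finite-dimensional and whose weights are truncated from below in each coset `h + ℤ`. -/
structure OrdModule (V : VOA) extends GenModule V where
  wt_fd : ∀ h : ℂ, FiniteDimensional ℂ ↥(wt h)
  wt_lower : ∀ h : ℂ, ∃ N : ℤ, ∀ m : ℤ, m ≤ N → wt (h + (m : ℂ)) = ⊥

namespace GenModule

variable {V : VOA} (W : GenModule V)

/-- `W₊ = ⊕_{Re h > 0} W₍ₕ₎`. -/
def posW : Submodule ℂ W.carrier := ⨆ (h : ℂ) (_ : 0 < h.re), W.wt h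

/-- `C₁(W) = span(v₋₁W₊ (v ∈ V₊) together with L(-1)W)`. -/
def C1W : Submodule ℂ W.carrier :=
  Submodule.span ℂ
    ({x : W.carrier | ∃ v ∈ V.pos, ∃ w ∈ W.posW, x = W.op v (-1) w}
      ∪ {x : W.carrier | ∃ w : W.carrier, x = W.op V.omega 0 w})

/-- The restricted dual `W' = ⊕ₕ W₍ₕ₎* ⊆ W*`: the linear functionals vanishing on all
but finitely many weight spaces. -/
def restrictedDual : Set (W.carrier → ℂ) :=
  {α | IsLinearMap ℂ α ∧ {h : ℂ | ∃ w ∈ W.wt h, α w ≠ 0}.Finite}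

end GenModule

/-- `D(W)⁰`: the sum of the `L(0)`-eigenspaces of the weak module `D(W) ⊆ W*`, where
`L*(0) = ω*₁` acts on `α ∈ W*` by `(L*(0)α)(w) = α(L(0)w)`. -/
def OrdModule.DW0 {V : VOA} (W : OrdModule V) : Set (W.carrier → ℂ) :=
  {α | ∃ (S : Finset ℂ) (f : ℂ → (W.carrier → ℂ)),
    (∀ h ∈ S, f h ∈ W.toWeakModule.DW ∧
      ∀ w : W.carrier, f h (W.op V.omega 1 w) = h * f h w) ∧
    α = ∑ h ∈ S, f h}

/-- An ℕ-gradable weak `V`-module: a weak module with an ℕ-grading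
`W = ⊕_{n∈ℕ} W(n)` with `v_m W(n) ⊆ W(wt v + n - m - 1)` (graded pieces of negative
index are zero). -/
structure NGradedModule (V : VOA) extends WeakModule V where
  gr : ℤ → Submodule ℂ carrier
  gr_neg : ∀ n : ℤ, n < 0 → gr n = ⊥
  gr_sup : (⨆ n : ℤ, gr n) = ⊤
  gr_indep : ∀ n : ℤ, Disjoint (gr n) (⨆ (m : ℤ) (_ : m ≠ n), gr m)
  gr_op : ∀ k : ℤ, ∀ v ∈ V.wtSpace k, ∀ m n : ℤ, ∀ w ∈ gr n,
    op v m w ∈ gr (k + n - m - 1)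

/-- An intertwining operator of type `(W₃; W₁ W₂)` in the sense of
Frenkel–Huang–Lepowsky, recorded through its complex-indexed modes
`I w₁ h w₂ = (w₁)ₕ w₂` (so `Y(w₁,x)w₂ = Σ_{h∈ℂ} (w₁)ₕ w₂ x^{-h-1}`):
linearity, truncation, the `L(-1)`-derivative property, and the Jacobi identity in
component (Borcherds) form. -/
def IsIntertwiner {V : VOA} (W1 W2 W3 : OrdModule V)
    (I : W1.carrier → ℂ → W2.carrier → W3.carrier) : Prop :=
  (∀ (h : ℂ) (w2 : W2.carrier), IsLinearMap ℂ fun w1 => I w1 h w2) ∧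
  (∀ (w1 : W1.carrier) (h : ℂ), IsLinearMap ℂ (I w1 h)) ∧
  (∀ (w1 : W1.carrier) (w2 : W2.carrier) (h : ℂ),
    ∃ N : ℤ, ∀ n : ℤ, N ≤ n → I w1 (h + (n : ℂ)) w2 = 0) ∧
  (∀ (w1 : W1.carrier) (h : ℂ) (w2 : W2.carrier),
    I (W1.op V.omega 0 w1) h w2 = (-h) • I w1 (h - 1) w2) ∧
  (∀ (u : V.carrier) (w1 : W1.carrier) (w2 : W2.carrier) (l m : ℤ) (h : ℂ),
    (∑ᶠ i : ℕ, cchoose m i • I (W1.op u (l + (i : ℤ)) w1) ((m : ℂ) + h - (i : ℂ)) w2)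
      = ∑ᶠ i : ℕ, ((-1 : ℂ) ^ i * cchoose l i) •
          (W3.op u (l + m - (i : ℤ)) (I w1 (h + (i : ℂ)) w2)
            - ((-1 : ℂ) ^ l) • I w1 ((l : ℂ) + h - (i : ℂ)) (W2.op u (m + (i : ℤ)) w2)))

/-- The fusion rule `dim I(W₃; W₁W₂)` is finite: the space of intertwining operators of
the indicated type is finite-dimensional. -/
def FusionFinite {V : VOA} (W1 W2 W3 : OrdModule V) : Prop :=
  FiniteDimensional ℂ
    ↥(Submodule.span ℂ {I : W1.carrier → ℂ → W2.carrier → W3.carrier |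
        IsIntertwiner W1 W2 W3 I})

end

namespace VOA

variable (V : VOA)

theorem op_zero_left (n : ℤ) (w : V.carrier) : V.op 0 n w = 0 :=
  (V.op_linear_left n w).map_zero

theorem op_zero_right (u : V.carrier) (n : ℤ) : V.op u n 0 = 0 :=
  (V.op_linear_right u n).map_zero

theorem op_add_left (u u' : V.carrier) (n : ℤ) (w : V.carrier) :
    V.op (u + u') n w = V.op u n w + V.op u' n w :=
  (V.op_linear_left n w).map_add u u'

theorem op_add_right (u : V.carrier) (n : ℤ) (w w' : V.carrier) :
    V.op u n (w + w') = V.op u n w + V.op u n w' :=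
  (V.op_linear_right u n).map_add w w'

theorem op_smul_left (c : ℂ) (u : V.carrier) (n : ℤ) (w : V.carrier) :
    V.op (c • u) n w = c • V.op u n w :=
  (V.op_linear_left n w).map_smul c u

theorem op_smul_right (c : ℂ) (u : V.carrier) (n : ℤ) (w : V.carrier) :
    V.op u n (c • w) = c • V.op u n w :=
  (V.op_linear_right u n).map_smul c w

/-- Induction over sums of homogeneous vectors. -/
theorem homog_induction {P : V.carrier → Prop} (hz : P 0)
    (ha : ∀ x y, P x → P y → P (x + y))
    (hh : ∀ (n : ℤ), ∀ x ∈ V.wtSpace n, P x) (v : V.carrier) : P v := by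
  rw [← V.proj_sum v]
  exact finsum_induction P hz ha fun n => hh n _ (V.proj_mem n v)

/-- The span of iterated modes of elements of `U` on the vacuum. -/
def genSpan (U : Set V.carrier) : Submodule ℂ V.carrier :=
  Submodule.span ℂ {x : V.carrier | ∃ l : List (V.carrier × ℤ),
    (∀ p ∈ l, p.1 ∈ U) ∧ x = V.iterApply l V.one}

theorem one_mem_genSpan (U : Set V.carrier) : V.one ∈ V.genSpan U :=
  Submodule.subset_span ⟨[], by simp, rfl⟩

theorem op_mem_genSpan_of_mem {U : Set V.carrier} {s : V.carrier} (hs : s ∈ U) (n : ℤ)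
    {w : V.carrier} (hw : w ∈ V.genSpan U) : V.op s n w ∈ V.genSpan U := by
  unfold genSpan at hw
  induction hw using Submodule.span_induction with
  | mem x hx =>
    obtain ⟨l, hl, rfl⟩ := hx
    refine Submodule.subset_span ⟨(s, n) :: l, ?_, rfl⟩
    intro p hp
    rcases List.mem_cons.1 hp with rfl | hp
    · exact hs
    · exact hl p hp
  | zero => rw [op_zero_right]; exact Submodule.zero_mem _
  | add x y _ _ hx hy => rw [op_add_right]; exact Submodule.add_mem _ hx hy
  | smul c x _ hx => rw [op_smul_right]; exact Submodule.smul_mem _ _ hx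

theorem subset_genSpan {U : Set V.carrier} {s : V.carrier} (hs : s ∈ U) : s ∈ V.genSpan U := by
  have := V.op_mem_genSpan_of_mem hs (-1) (V.one_mem_genSpan U)
  rwa [V.create] at this

theorem cchoose_zero (i : ℕ) : cchoose 0 i = if i = 0 then 1 else 0 := by
  unfold cchoose
  split_ifs with h
  · subst h; simp
  · rw [Finset.prod_eq_zero (Finset.mem_range.2 (Nat.pos_of_ne_zero h))]
    · simp
    · simp

/-- The iterate formula (Borcherds identity with `m = 0`). -/
theorem op_op (u v w : V.carrier) (l n : ℤ) :
    V.op (V.op u l v) n w = ∑ᶠ i : ℕ, ((-1 : ℂ) ^ i * cchoose l i) •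
          (V.op u (l + 0 - (i : ℤ)) (V.op v (n + (i : ℤ)) w)
            - ((-1 : ℂ) ^ l) • V.op v (l + n - (i : ℤ)) (V.op u (0 + (i : ℤ)) w)) := by
  rw [← V.borcherds u v w l 0 n, finsum_eq_single _ 0]
  · simp [cchoose_zero]
  · intro i hi
    simp [cchoose_zero, hi]

theorem finsum_mem_sub {ι : Type} (G : Submodule ℂ V.carrier) (f : ι → V.carrier)
    (h : ∀ i, f i ∈ G) : (∑ᶠ i, f i) ∈ G :=
  finsum_induction (fun x => x ∈ G) G.zero_mem (fun _ _ => G.add_mem) h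

/-- The generated subspace is closed under all modes. -/
theorem op_mem_genSpan {U : Set V.carrier} {u : V.carrier} (hu : u ∈ V.genSpan U) :
    ∀ (n : ℤ) (w : V.carrier), w ∈ V.genSpan U → V.op u n w ∈ V.genSpan U := by
  unfold genSpan at hu
  induction hu using Submodule.span_induction with
  | mem x hx =>
    obtain ⟨l, hl, rfl⟩ := hx
    induction l with
    | nil =>
      intro n w hw
      simp only [iterApply, V.one_op]
      split_ifs
      · exact hw
      · exact Submodule.zero_mem _
    | cons p l ih =>
      have ih' := ih fun q hq => hl q (List.mem_cons_of_mem _ hq)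
      have hp : p.1 ∈ U := hl p List.mem_cons_self
      intro n w hw
      simp only [iterApply]
      rw [op_op]
      refine V.finsum_mem_sub _ _ fun i => Submodule.smul_mem _ _ (Submodule.sub_mem _ ?_ ?_)
      · exact V.op_mem_genSpan_of_mem hp _ (ih' _ _ hw)
      · exact Submodule.smul_mem _ _ (ih' _ _ (V.op_mem_genSpan_of_mem hp _ hw))
  | zero => intro n w _; rw [op_zero_left]; exact Submodule.zero_mem _
  | add x y _ _ hx hy =>
    intro n w hw
    rw [op_add_left]; exact Submodule.add_mem _ (hx n w hw) (hy n w hw)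
  | smul c x _ hx => intro n w hw; rw [op_smul_left]; exact Submodule.smul_mem _ _ (hx n w hw)

theorem C2_le_C1 (hneg : ∀ n : ℤ, n < 0 → V.wtSpace n = ⊥)
    (h0 : V.wtSpace 0 = Submodule.span ℂ {V.one}) : V.C2 ≤ V.C1 := by
  refine Submodule.span_le.2 ?_
  rintro _ ⟨u, v, rfl⟩
  have hpos : ∀ (n : ℤ), 1 ≤ n → ∀ x ∈ V.wtSpace n, x ∈ V.pos := fun n hn x hx =>
    (le_iSup₂_of_le (f := fun (n : ℤ) (_ : 1 ≤ n) => V.wtSpace n) n hn le_rfl) hx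
  have key : ∀ u v : V.carrier, V.op u (-2) v = V.op (V.op V.omega 0 u) (-1) v := by
    intro u v
    rw [V.L_neg_one]
    norm_num
  change V.op u (-2) v ∈ V.C1
  refine V.homog_induction (P := fun u => V.op u (-2) v ∈ V.C1) ?_ ?_ ?_ u
  · rw [op_zero_left]; exact Submodule.zero_mem _
  · intro x y hx hy; rw [op_add_left]; exact Submodule.add_mem _ hx hy
  intro i u hu
  refine V.homog_induction (P := fun v => V.op u (-2) v ∈ V.C1) ?_ ?_ ?_ v
  · rw [op_zero_right]; exact Submodule.zero_mem _
  · intro x y hx hy; rw [op_add_right]; exact Submodule.add_mem _ hx hy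
  intro j v hv
  rcases lt_trichotomy i 0 with hi | rfl | hi
  · rw [hneg i hi, Submodule.mem_bot] at hu
    rw [hu, op_zero_left]; exact Submodule.zero_mem _
  · rw [h0] at hu
    obtain ⟨c, rfl⟩ := Submodule.mem_span_singleton.1 hu
    rw [op_smul_left, V.one_op]
    simp
  rcases lt_trichotomy j 0 with hj | rfl | hj
  · rw [hneg j hj, Submodule.mem_bot] at hv
    rw [hv, op_zero_right]; exact Submodule.zero_mem _
  · rw [h0] at hv
    obtain ⟨c, rfl⟩ := Submodule.mem_span_singleton.1 hv
    rw [op_smul_right, key, V.create]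
    exact Submodule.smul_mem _ _ (Submodule.subset_span (Or.inr ⟨u, rfl⟩))
  · rw [key]
    refine Submodule.subset_span (Or.inl ⟨_, hpos _ ?_ _ (V.op_wt 2 i 0 _ V.omega_wt _ hu),
      _, hpos j hj _ hv, rfl⟩)
    omega

theorem proj_C2_mem (hneg : ∀ n : ℤ, n < 0 → V.wtSpace n = ⊥) {U : Set V.carrier} (n : ℤ)
    (ih : ∀ k : ℤ, k < n → V.wtSpace k ≤ V.genSpan U) {c : V.carrier} (hc : c ∈ V.C2) :
    V.proj n c ∈ V.genSpan U := by
  have hadd := (V.proj_linear n).map_add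
  have hzero := (V.proj_linear n).map_zero
  have hsmul := (V.proj_linear n).map_smul
  unfold C2 at hc
  induction hc using Submodule.span_induction with
  | zero => rw [hzero]; exact Submodule.zero_mem _
  | add x y _ _ hx hy => rw [hadd]; exact Submodule.add_mem _ hx hy
  | smul c x _ hx => rw [hsmul]; exact Submodule.smul_mem _ _ hx
  | mem x hx =>
    obtain ⟨u, v, rfl⟩ := hx
    refine V.homog_induction (P := fun u => V.proj n (V.op u (-2) v) ∈ V.genSpan U) ?_ ?_ ?_ u
    · rw [op_zero_left, hzero]; exact Submodule.zero_mem _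
    · intro x y hx hy; rw [op_add_left, hadd]; exact Submodule.add_mem _ hx hy
    intro i u hu
    refine V.homog_induction (P := fun v => V.proj n (V.op u (-2) v) ∈ V.genSpan U) ?_ ?_ ?_ v
    · rw [op_zero_right, hzero]; exact Submodule.zero_mem _
    · intro x y hx hy; rw [op_add_right, hadd]; exact Submodule.add_mem _ hx hy
    intro j v hv
    rcases lt_or_ge i 0 with hi | hi
    · rw [hneg i hi, Submodule.mem_bot] at hu
      rw [hu, op_zero_left, hzero]; exact Submodule.zero_mem _
    rcases lt_or_ge j 0 with hj | hj
    · rw [hneg j hj, Submodule.mem_bot] at hv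
      rw [hv, op_zero_right, hzero]; exact Submodule.zero_mem _
    have hw := V.op_wt i j (-2) u hu v hv
    by_cases h : i + j - (-2) - 1 = n
    · rw [h] at hw
      rw [V.proj_eq n _ hw]
      exact V.op_mem_genSpan (ih i (by omega) hu) _ _ (ih j (by omega) hv)
    · rw [V.proj_ne _ n h _ hw]
      exact Submodule.zero_mem _

theorem finitelyGenerated_aux (hneg : ∀ n : ℤ, n < 0 → V.wtSpace n = ⊥)
    (hC2 : FiniteDimensional ℂ (V.carrier ⧸ V.C2)) : V.FinitelyGenerated := by
  classical
  obtain ⟨T, hT⟩ := Module.finite_def.1 hC2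
  -- lift the finite generating set to `V`
  have hsurj := V.C2.mkQ_surjective
  choose g hg using hsurj
  let S : Finset V.carrier :=
    T.biUnion fun t => (V.proj_finite (g t)).toFinset.image fun k => V.proj k (g t)
  have hS : ∀ t ∈ T, ∀ n : ℤ, V.proj n (g t) ∈ V.genSpan (S : Set V.carrier) := by
    intro t ht n
    by_cases h : V.proj n (g t) = 0
    · rw [h]; exact Submodule.zero_mem _
    · refine V.subset_genSpan ?_
      simp only [S, Finset.coe_biUnion, Set.mem_iUnion, Finset.mem_coe, Finset.mem_image]
      exact ⟨t, ht, n, by simpa using h, rfl⟩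
  have hdec : ∀ x : V.carrier, ∃ s ∈ Submodule.span ℂ (Set.image g (T : Set _)), x - s ∈ V.C2 := by
    intro x
    have hx : V.C2.mkQ x ∈ Submodule.span ℂ (T : Set (V.carrier ⧸ V.C2)) := by
      rw [hT]; trivial
    have hTi : (T : Set (V.carrier ⧸ V.C2)) = Set.image V.C2.mkQ (Set.image g (T : Set _)) := by
      rw [Set.image_image]; simp [hg]
    rw [hTi, ← Submodule.map_span] at hx
    obtain ⟨s, hs, hsx⟩ := hx
    refine ⟨s, hs, ?_⟩
    rw [← Submodule.ker_mkQ V.C2, LinearMap.mem_ker, map_sub, hsx, sub_self]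
  have hproj : ∀ n : ℤ, ∀ s ∈ Submodule.span ℂ (Set.image g (T : Set _)),
      V.proj n s ∈ V.genSpan (S : Set V.carrier) := by
    intro n s hs
    induction hs using Submodule.span_induction with
    | mem x hx => obtain ⟨t, ht, rfl⟩ := hx; exact hS t ht n
    | zero => rw [(V.proj_linear n).map_zero]; exact Submodule.zero_mem _
    | add x y _ _ hx hy => rw [(V.proj_linear n).map_add]; exact Submodule.add_mem _ hx hy
    | smul c x _ hx => rw [(V.proj_linear n).map_smul]; exact Submodule.smul_mem _ _ hx
  have hmain : ∀ (N : ℕ) (n : ℤ), n < N → V.wtSpace n ≤ V.genSpan (S : Set V.carrier) := by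
    intro N
    induction N with
    | zero => intro n hn; rw [hneg n (by simpa using hn)]; exact bot_le
    | succ N ih =>
      intro n hn x hx
      obtain ⟨s, hs, hc⟩ := hdec x
      have h1 := V.proj_C2_mem hneg n
        (fun k hk => ih k (by push_cast at hn; omega)) hc
      have h2 := Submodule.add_mem _ h1 (hproj n s hs)
      rw [← (V.proj_linear n).map_add, sub_add_cancel, V.proj_eq n x hx] at h2
      exact h2
  refine ⟨S, ?_⟩
  change V.genSpan (S : Set V.carrier) = ⊤
  rw [eq_top_iff]
  intro v _
  refine V.homog_induction (P := fun v => v ∈ V.genSpan (S : Set V.carrier))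
    (Submodule.zero_mem _) (fun _ _ => Submodule.add_mem _) ?_ v
  intro n x hx
  exact hmain (n.toNat + 1) n (by push_cast; omega) hx

end VOA

/-- Suppose `V = ⊕_{n∈ℕ} V₍ₙ₎` (no negative weights) with
`V₍₀₎ = ℂ1`.  Then `C₂(V) ⊆ C₁(V)`, and if `V` satisfies the `C₂`-finiteness condition
(`dim V/C₂(V) < ∞`) then `V` is finitely generated as a vertex operator algebra. -/
theorem finitelyGenerated_of_C2_finite (V : VOA)
    (hneg : ∀ n : ℤ, n < 0 → V.wtSpace n = ⊥)
    (h0 : V.wtSpace 0 = Submodule.span ℂ {V.one})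
    (hC2 : FiniteDimensional ℂ (V.carrier ⧸ V.C2)) :
    V.C2 ≤ V.C1 ∧ V.FinitelyGenerated := by
  exact ⟨V.C2_le_C1 hneg h0, V.finitelyGenerated_aux hneg hC2⟩
end

section
/- Let V be a vertex operator algebra, W a weak V-module, and n ≥ 2. Then, identifying (W/C_n(W))* with the subspace of W* of functionals vanishing on C_n(W), one has (W/C_n(W))* = {α ∈ W* : v*_m α = 0 for all homogeneous v ∈ V and all m ≥ 2·wt(v) + n − 2}. In particular, (W/C_n(W))* ⊆ D(W). -/
theorem aux_finsum_single {M : Type} [AddCommGroup M] {ι : Type} (f : ι → M) (a : ι)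
    (h : ∀ i, i ≠ a → f i = 0) : (∑ᶠ i, f i) = f a :=
  finsum_eq_single f a h

theorem aux_cchoose_neg_two (i : ℕ) : (-1 : ℂ) ^ i * cchoose (-2) i = (i : ℂ) + 1 := by
  have key : ∀ i : ℕ, (∏ j ∈ Finset.range i, (((-2 : ℤ) : ℂ) - (j : ℂ)))
      = (-1 : ℂ) ^ i * (Nat.factorial i : ℂ) * ((i : ℂ) + 1) := by
    intro i
    induction i with
    | zero => simp
    | succ k ih =>
      rw [Finset.prod_range_succ, ih, Nat.factorial_succ]
      push_cast
      ring
  have hf : (Nat.factorial i : ℂ) ≠ 0 := by exact_mod_cast Nat.factorial_ne_zero i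
  have h1 : ((-1 : ℂ) ^ i) * (-1) ^ i = 1 := by
    rw [← mul_pow]; simp
  rw [cchoose, key]
  field_simp
  rw [pow_two, h1]

theorem aux_cchoose_zero (i : ℕ) (hi : i ≠ 0) : cchoose 0 i = 0 := by
  unfold cchoose
  rw [Finset.prod_eq_zero (i := 0) (by simp; omega) (by simp)]
  simp

/-- `(u_{-2} 1)_{-k} w = k u_{-k-1} w`. -/
theorem aux_deriv {V : VOA} (W : WeakModule V) (u : V.carrier) (w : W.carrier) (k : ℕ)
    (hk : 1 ≤ k) :
    W.op (V.op u (-2) V.one) (-(k : ℤ)) w = (k : ℂ) • W.op u (-(k : ℤ) - 1) w := by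
  have hB := W.borcherds u V.one w (-2) 0 (-(k : ℤ))
  rw [finsum_eq_single _ 0 (by intro i hi; rw [aux_cchoose_zero i hi, zero_smul]),
    finsum_eq_single _ (k - 1)] at hB
  · have h0 : cchoose 0 0 = 1 := by simp [cchoose]
    rw [h0, aux_cchoose_neg_two, W.one_op, W.one_op, if_pos (by omega), if_neg (by omega)] at hB
    simp only [Nat.cast_zero, add_zero, zero_add, sub_zero, one_smul, smul_zero] at hB
    rw [hB]
    have e1 : ((k - 1 : ℕ) : ℂ) + 1 = k := by
      rw [Nat.cast_sub hk]; simp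
    have e2 : (-2 : ℤ) - ((k - 1 : ℕ) : ℤ) = -(k : ℤ) - 1 := by omega
    rw [e1, e2]
  · intro i hi
    rw [W.one_op, W.one_op, if_neg (by omega), if_neg (by omega),
      (W.op_linear_right _ _).map_zero]
    simp

theorem aux_vanish {V : VOA} (W : WeakModule V) (n : ℤ) (hn : 2 ≤ n) (α : W.carrier → ℂ)
    (hα : IsLinearMap ℂ α) (h : ∀ x ∈ W.Cn n, α x = 0) (d : ℕ) :
    ∀ (v : V.carrier) (w : W.carrier), α (W.op v (-n - (d : ℤ)) w) = 0 := by
  induction d with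
  | zero =>
    intro v w
    apply h
    exact Submodule.subset_span ⟨v, w, by simp⟩
  | succ d ih =>
    intro v w
    obtain ⟨k, hk⟩ : ∃ k : ℕ, (k : ℤ) = n + d := ⟨(n + d).toNat, by omega⟩
    have h1 := aux_deriv W v w k (by omega)
    have h2 := ih (V.op v (-2) V.one) w
    have e : -n - (d : ℤ) = -(k : ℤ) := by omega
    rw [e, h1, hα.map_smul, smul_eq_mul] at h2
    have hk0 : (k : ℂ) ≠ 0 := by
      have : k ≠ 0 := by omega
      exact_mod_cast this
    have e' : -n - ((d + 1 : ℕ) : ℤ) = -(k : ℤ) - 1 := by push_cast; omega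
    rw [e']
    exact (mul_eq_zero.mp h2).resolve_left hk0

theorem aux_vanish' {V : VOA} (W : WeakModule V) (n : ℤ) (hn : 2 ≤ n) (α : W.carrier → ℂ)
    (hα : IsLinearMap ℂ α) (h : ∀ x ∈ W.Cn n, α x = 0) (m : ℤ) (hm : m ≤ -n)
    (v : V.carrier) (w : W.carrier) : α (W.op v m w) = 0 := by
  have := aux_vanish W n hn α hα h (-n - m).toNat v w
  rwa [show -n - (((-n - m).toNat : ℕ) : ℤ) = m by omega] at this

theorem aux_L_mem (V : VOA) (k : ℤ) (v : V.carrier) (hv : v ∈ V.wtSpace k) (i : ℕ) :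
    (V.L 1)^[i] v ∈ V.wtSpace (k - i) := by
  induction i with
  | zero => simpa using hv
  | succ i ih =>
    rw [Function.iterate_succ_apply']
    have := V.op_wt 2 (k - i) (1 + 1) V.omega V.omega_wt _ ih
    rw [show (2 : ℤ) + (k - i) - (1 + 1) - 1 = k - ((i + 1 : ℕ) : ℤ) by push_cast; ring] at this
    exact this

theorem aux_term_zero {V : VOA} (W : WeakModule V) (α : W.carrier → ℂ)
    (hα : IsLinearMap ℂ α) (i : ℕ) (m : ℤ) (w : W.carrier) :
    α (W.op ((V.L 1)^[i] 0) m w) = 0 := by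
  have h0 : (V.L 1)^[i] 0 = 0 :=
    Function.iterate_fixed (V.op_linear_right V.omega (1 + 1)).map_zero i
  rw [h0, (W.op_linear_left m w).map_zero, hα.map_zero]

theorem aux_dmode_zero {V : VOA} (W : WeakModule V) (n : ℤ) (hn : 2 ≤ n) (α : W.carrier → ℂ)
    (hα : IsLinearMap ℂ α) (h : ∀ x ∈ W.Cn n, α x = 0) (v : V.carrier) (m : ℤ)
    (hm : ∀ k : ℤ, V.proj k v ≠ 0 → 2 * k + n - 2 ≤ m) (w : W.carrier) :
    W.dmode v m α w = 0 := by
  unfold WeakModule.dmode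
  apply finsum_eq_zero_of_forall_eq_zero
  intro k
  apply finsum_eq_zero_of_forall_eq_zero
  intro i
  by_cases hp : V.proj k v = 0
  · rw [hp, aux_term_zero W α hα, mul_zero]
  · have := hm k hp
    rw [aux_vanish' W n hn α hα h _ (by omega), mul_zero]

theorem aux_back {V : VOA} (W : WeakModule V) (n : ℤ) (α : W.carrier → ℂ)
    (hα : IsLinearMap ℂ α)
    (h : ∀ k : ℤ, ∀ v ∈ V.wtSpace k,
          ∀ m : ℤ, 2 * k + n - 2 ≤ m → ∀ w : W.carrier, W.dmode v m α w = 0)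
    (N : ℤ) (hN : ∀ k : ℤ, k < N → V.wtSpace k = ⊥) (d : ℕ) :
    ∀ k : ℤ, k < N + d → ∀ v ∈ V.wtSpace k, ∀ j : ℤ, n ≤ j → ∀ w : W.carrier,
      α (W.op v (-j) w) = 0 := by
  induction d with
  | zero =>
    intro k hk v hv j _ w
    rw [hN k (by simpa using hk), Submodule.mem_bot] at hv
    rw [hv, (W.op_linear_left (-j) w).map_zero, hα.map_zero]
  | succ d ih =>
    intro k hk v hv j hj w
    push_cast at hk
    have h1 := h k v hv (2 * k + j - 2) (by omega) w
    unfold WeakModule.dmode at h1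
    rw [finsum_eq_single _ k, finsum_eq_single _ 0] at h1
    · rw [V.proj_eq k v hv] at h1
      have e : 2 * k - (2 * k + j - 2) - ((0 : ℕ) : ℤ) - 2 = -j := by push_cast; ring
      rw [e] at h1
      refine (mul_eq_zero.mp h1).resolve_left ?_
      simp [zpow_ne_zero]
    · intro i hi
      rw [V.proj_eq k v hv]
      have e : 2 * k - (2 * k + j - 2) - (i : ℤ) - 2 = -(j + i) := by ring
      rw [e, ih (k - i) (by omega) _ (aux_L_mem V k v hv i) (j + i) (by omega) w, mul_zero]
    · intro k' hk'
      apply finsum_eq_zero_of_forall_eq_zero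
      intro i
      rw [V.proj_ne k k' (Ne.symm hk') v hv, aux_term_zero W α hα, mul_zero]

/-- For a weak `V`-module `W` and `n ≥ 2`, identifying
`(W/Cₙ(W))*` with the functionals in `W*` vanishing on `Cₙ(W)`, one has
`(W/Cₙ(W))* = {α ∈ W* : v*ₘ α = 0 for all homogeneous v ∈ V and all m ≥ 2·wt(v)+n-2}`,
and in particular `(W/Cₙ(W))* ⊆ D(W)`. -/
theorem Cn_dual_eq_and_subset_DW (V : VOA) (W : WeakModule V) (n : ℤ) (hn : 2 ≤ n) :
    ({α : W.carrier → ℂ | IsLinearMap ℂ α ∧ ∀ x ∈ W.Cn n, α x = 0}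
      = {α : W.carrier → ℂ | IsLinearMap ℂ α ∧ ∀ k : ℤ, ∀ v ∈ V.wtSpace k,
          ∀ m : ℤ, 2 * k + n - 2 ≤ m → ∀ w : W.carrier, W.dmode v m α w = 0}) ∧
    {α : W.carrier → ℂ | IsLinearMap ℂ α ∧ ∀ x ∈ W.Cn n, α x = 0} ⊆ W.DW := by
  constructor
  · ext α
    constructor
    · rintro ⟨hα, h⟩
      refine ⟨hα, fun k v hv m hm w => aux_dmode_zero W n hn α hα h v m ?_ w⟩
      intro k' hk'
      by_cases hkk : k = k'
      · subst hkk; exact hm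
      · exact absurd (V.proj_ne k k' hkk v hv) hk'
    · rintro ⟨hα, h⟩
      refine ⟨hα, ?_⟩
      obtain ⟨N, hN⟩ := V.lower_trunc
      have hom : ∀ k : ℤ, ∀ v ∈ V.wtSpace k, ∀ w : W.carrier, α (W.op v (-n) w) = 0 :=
        fun k v hv w => aux_back W n α hα h N hN (k - N + 1).toNat k (by omega) v hv n le_rfl w
      have key : W.Cn n ≤ LinearMap.ker (IsLinearMap.mk' α hα) := by
        refine Submodule.span_le.mpr ?_
        rintro x ⟨v, w, rfl⟩
        let f : V.carrier →ₗ[ℂ] ℂ :=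
          (IsLinearMap.mk' α hα) ∘ₗ (IsLinearMap.mk' _ (W.op_linear_left (-n) w))
        change f v = 0
        rw [← V.proj_sum v, finsum_eq_sum _ (V.proj_finite v), map_sum]
        exact Finset.sum_eq_zero fun k _ => hom k _ (V.proj_mem k v) w
      intro x hx
      exact key hx
  · rintro α ⟨hα, h⟩
    refine ⟨hα, fun v => ?_⟩
    obtain ⟨B, hB⟩ := (V.proj_finite v).bddAbove
    refine ⟨2 * B + n - 2, fun m hm w => aux_dmode_zero W n hn α hα h v m ?_ w⟩
    intro k hk
    have : k ≤ B := hB hk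
    omega
end
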